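/- Let ℳ be a finite family of models containing a reference model 0, and ζ a probability distribution on ℳ. Let 𝔄 be a T-episode algorithm and let exit be an exit criterion assigning to every partial transcript τ^{(1:t)} (1 ≤ t < T) a value in {TRUE, FALSE}. Define the stopping time 𝖳(τ^{(1:T)}) := min( {t < T : exit(τ^{(1:t)}) = TRUE} ∪ {T} ) and let Φ be the corresponding truncation map into X := ⊔_{t=1}^T ((𝒪×𝒜)^H)^t. Then TV( Φ_*(E_{M∼ζ}[ℙ_M^𝔄]), Φ_*ℙ_0^𝔄 ) ≥ TV( E_{M∼ζ}[ℙ_M^𝔄], ℙ_0^𝔄 ) − ℙ_0^𝔄( ∃ t < T : exit(τ^{(1:t)}) = TRUE ). -/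

import Mathlib

/-!
Let `E` be the event that the exit criterion fires before episode `T`. A transcript outside `E` is
not truncated, so its image under the truncation map `Φ` has length `T`, whereas transcripts in `E`
have shorter images. Hence every fibre of `Φ` is either contained in `E` or a single transcript
outside `E`. Writing `p` for the mixture law and `q` for the reference law, the triangle inequality
on the fibres gives
`∑_{x ∈ E} (p x - q x) + ∑_{x ∉ E} |p x - q x| ≤ ∑_l |Φ_* p l - Φ_* q l|`,
and `|p x - q x| ≤ (p x - q x) + 2 * q x` on `E` bounds the left side from below by
`∑_x |p x - q x| - 2 * q(E)`. This is `tv_sub_le_tv_push`; halving gives the claim.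
-/

noncomputable section

/-- A model of a sequential decision process: for every partial history `τ_{h−1}` (a list of
observation–action pairs), a distribution `ℙ_M(o_h = · | τ_{h−1})` over the next
observation. -/
structure SDModel (O A : Type) [Fintype O] where
  obs : List (O × A) → O → ℝ
  obs_nonneg : ∀ τ o, 0 ≤ obs τ o
  obs_sum : ∀ τ, ∑ o, obs τ o = 1

namespace SDModel

variable {O A : Type} [Fintype O] [Fintype A] {H T : ℕ}

/-- `ℙ_M(τ) = Π_{h'≤H} ℙ_M(o_{h'} | τ_{h'−1})` for a full episode trajectory `τ`. -/
def trajProb (M : SDModel O A) (τ : Fin H → O × A) : ℝ :=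
  ∏ h : Fin H, M.obs ((List.ofFn τ).take h.1) (τ h).1

end SDModel

/-- A `T`-episode algorithm: a distribution over actions for every tuple of past episode
trajectories, within-episode history, and current observation. -/
structure SDAlg (O A : Type) [Fintype A] (H : ℕ) where
  act : List (Fin H → O × A) → List (O × A) → O → A → ℝ
  act_nonneg : ∀ past hist o a, 0 ≤ act past hist o a
  act_sum : ∀ past hist o, ∑ a, act past hist o a = 1

namespace SDModel

variable {O A : Type} [Fintype O] [Fintype A] {H T : ℕ}

/-- The transcript law `ℙ_M^𝔄(τ^{(1:T)})`. -/
def transcriptProb (M : SDModel O A) (𝔄 : SDAlg O A H)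
    (τs : Fin T → Fin H → O × A) : ℝ :=
  ∏ t : Fin T, ∏ h : Fin H,
    M.obs ((List.ofFn (τs t)).take h.1) ((τs t) h).1 *
      𝔄.act ((List.ofFn τs).take t.1) ((List.ofFn (τs t)).take h.1) ((τs t) h).1 ((τs t) h).2

end SDModel

open Classical in
/-- The pushforward `Φ_* p` of a probability mass function `p` on transcripts under a
truncation map `Φ` (the truncated transcripts, elements of `⊔_{t=1}^T ((𝒪×𝒜)^H)^t`, are
encoded as lists of episode trajectories of length between `1` and `T`). -/
def pushTrunc {O A : Type} [Fintype O] [Fintype A] {H T : ℕ}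
    (Φ : (Fin T → Fin H → O × A) → List (Fin H → O × A))
    (p : (Fin T → Fin H → O × A) → ℝ) : List (Fin H → O × A) → ℝ :=
  fun l => ∑ τs : Fin T → Fin H → O × A, if Φ τs = l then p τs else 0

/-- The chi-squared divergence `χ²(p‖q) = Σ_x p(x)²/q(x) − 1` of probability mass
functions. -/
def chiSqDiv {X : Type*} (p q : X → ℝ) : ℝ := (∑' x, p x ^ 2 / q x) - 1

/-- The total variation distance `(1/2)·Σ_x |p(x) − q(x)|` of probability mass functions. -/
def tvDistPMF {X : Type*} (p q : X → ℝ) : ℝ := (1 / 2) * ∑' x, |p x - q x|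

open Classical in
/-- The stopping time `𝖳 = min({t < T : exit(τ^{(1:t)}) = TRUE} ∪ {T})` induced by an exit
criterion. -/
def exitStopTime {O A : Type} [Fintype O] [Fintype A] {H : ℕ} (T : ℕ)
    (exit : List (Fin H → O × A) → Bool) (τs : Fin T → Fin H → O × A) : ℕ :=
  if h : ∃ t, 1 ≤ t ∧ t < T ∧ exit ((List.ofFn τs).take t) = true then Nat.find h else T

/-- Truncation bound for an arbitrary map `Φ` on a finite set which is injective off an exceptional
set `E` and does not mix `E` with its complement. Neither mass function has to be normalised. -/
theorem tv_sub_le_tv_push {O A : Type} [Fintype O] [Fintype A] {H T : ℕ}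
    (Φ : (Fin T → Fin H → O × A) → List (Fin H → O × A))
    (p q : (Fin T → Fin H → O × A) → ℝ) (hp : ∀ x, 0 ≤ p x) (hq : ∀ x, 0 ≤ q x)
    (E : (Fin T → Fin H → O × A) → Prop) [DecidablePred E]
    (hΦ : ∀ x y, ¬ E x → Φ y = Φ x → y = x) :
    tvDistPMF p q - (∑ x, if E x then q x else 0) ≤
      tvDistPMF (pushTrunc Φ p) (pushTrunc Φ q) := by
  classical
  have hpush : ∀ l, pushTrunc Φ p l - pushTrunc Φ q l
      = ∑ x ∈ Finset.univ.filter (fun x => Φ x = l), (p x - q x) := by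
    intro l
    simp only [pushTrunc, Finset.sum_sub_distrib, Finset.sum_filter]
  have hsum : ∑' l, |pushTrunc Φ p l - pushTrunc Φ q l|
      = ∑ l ∈ Finset.univ.image Φ, |pushTrunc Φ p l - pushTrunc Φ q l| := by
    refine tsum_eq_sum fun l hl => ?_
    rw [hpush, Finset.filter_eq_empty_iff.2]
    · simp
    · intro x _ hx
      exact hl (Finset.mem_image.2 ⟨x, Finset.mem_univ _, hx⟩)
  -- On a fibre inside `E` the bound is `le_abs_self`; any other fibre is a singleton.
  have hfib : ∑ x, (if E x then p x - q x else |p x - q x|)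
      ≤ ∑ l ∈ Finset.univ.image Φ, |pushTrunc Φ p l - pushTrunc Φ q l| := by
    rw [← Finset.sum_fiberwise_of_maps_to (s := Finset.univ) (t := Finset.univ.image Φ) (g := Φ)
      (fun x hx => Finset.mem_image_of_mem Φ hx)]
    refine Finset.sum_le_sum fun l _ => ?_
    rw [hpush]
    by_cases h : ∃ x, ¬ E x ∧ Φ x = l
    · obtain ⟨x, hx, rfl⟩ := h
      have hs : Finset.univ.filter (fun y => Φ y = Φ x) = {x} := by
        ext y
        simp only [Finset.mem_filter, Finset.mem_univ, true_and, Finset.mem_singleton]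
        exact ⟨hΦ x y hx, fun h => h ▸ rfl⟩
      simp [hs, hx]
    · push Not at h
      rw [Finset.sum_congr rfl fun x hx => if_pos (by
        by_contra hE
        exact h x hE (Finset.mem_filter.1 hx).2)]
      exact le_abs_self _
  have hpt : ∑ x, |p x - q x| - 2 * (∑ x, if E x then q x else 0)
      ≤ ∑ x, (if E x then p x - q x else |p x - q x|) := by
    rw [Finset.mul_sum, ← Finset.sum_sub_distrib]
    refine Finset.sum_le_sum fun x _ => ?_
    split_ifs
    · have : |p x - q x| ≤ p x + q x := abs_le.2 ⟨by linarith [hp x], by linarith [hq x]⟩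
      linarith
    · simp
  unfold tvDistPMF
  rw [hsum, tsum_fintype]
  linarith

theorem SDModel.transcriptProb_nonneg {O A : Type} [Fintype O] [Fintype A] {H T : ℕ}
    (M : SDModel O A) (𝔄 : SDAlg O A H) (τs : Fin T → Fin H → O × A) :
    0 ≤ M.transcriptProb 𝔄 τs :=
  Finset.prod_nonneg fun _ _ => Finset.prod_nonneg fun _ _ =>
    mul_nonneg (M.obs_nonneg _ _) (𝔄.act_nonneg _ _ _ _)

open Classical in
/-- **Lemma A.6 (early stopping perturbs the TV distance by at most the exit
probability).** For any exit criterion `exit`, with `𝖳` the induced stopping time and `Φ`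
the corresponding truncation map,
`TV(Φ_*(E_{M∼ζ}[ℙ_M^𝔄]), Φ_*ℙ_0^𝔄) ≥ TV(E_{M∼ζ}[ℙ_M^𝔄], ℙ_0^𝔄) − ℙ_0^𝔄(∃ t < T, exit(τ^{(1:t)}))`. -/
theorem tv_truncation_lower_bound {O A : Type} [Fintype O] [Fintype A]
    [Nonempty O] [Nonempty A] (H T : ℕ) (hH : 1 ≤ H) (hT : 1 ≤ T)
    {ι : Type} [Fintype ι] (Mdl : ι → SDModel O A) (M0 : SDModel O A)
    (h0 : ∃ i, Mdl i = M0)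
    (ζ : ι → ℝ) (hζ0 : ∀ i, 0 ≤ ζ i) (hζ1 : ∑ i, ζ i = 1)
    (𝔄 : SDAlg O A H) (exit : List (Fin H → O × A) → Bool) :
    tvDistPMF
        (fun τs : Fin T → Fin H → O × A => ∑ i, ζ i * (Mdl i).transcriptProb 𝔄 τs)
        (fun τs : Fin T → Fin H → O × A => M0.transcriptProb 𝔄 τs) -
      (∑ τs : Fin T → Fin H → O × A,
        if ∃ t, 1 ≤ t ∧ t < T ∧ exit ((List.ofFn τs).take t) = true then
          M0.transcriptProb 𝔄 τs
        else 0) ≤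
    tvDistPMF
        (pushTrunc (fun τs => (List.ofFn τs).take (exitStopTime T exit τs))
          (fun τs => ∑ i, ζ i * (Mdl i).transcriptProb 𝔄 τs))
        (pushTrunc (fun τs => (List.ofFn τs).take (exitStopTime T exit τs))
          (fun τs => M0.transcriptProb 𝔄 τs)) := by
  classical
  refine tv_sub_le_tv_push _ _ _
    (fun x => Finset.sum_nonneg fun i _ =>
      mul_nonneg (hζ0 i) ((Mdl i).transcriptProb_nonneg 𝔄 x))
    (fun x => M0.transcriptProb_nonneg 𝔄 x) _ ?_
  intro x y hx hxy
  have hlen := congrArg List.length hxy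
  have hTx : exitStopTime T exit x = T := dif_neg hx
  simp only [hTx, List.length_take, List.length_ofFn, min_self] at hlen
  have hyT : T ≤ exitStopTime T exit y := by omega
  simp only [hTx] at hxy
  rw [List.take_of_length_le (by simpa using hyT), List.take_of_length_le (by simp)] at hxy
  exact List.ofFn_injective hxy
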